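/- arXiv:2109.08737 — 2 statements merged into one kernel-verified Lean document; each statement's English description precedes it below -/
import Mathlib

section
/- Let R be a commutative ring equipped with a derivation δ : R → R (an additive map satisfying δ(xy) = xδ(y) + δ(x)y, applied entrywise to matrices). For G ∈ M_n(R) define the iterated matrices by G_0 = I_n and G_{s+1} = G_s·G + δ(G_s). Let P ∈ GL_n(R) and set H = P·G·P⁻¹ + δ(P)·P⁻¹, with iterated matrices H_0 = I_n, H_{s+1} = H_s·H + δ(H_s). Then for every s ≥ 0 one has H_s = Σ_{m=0}^{s} binom(s,m) · δ^{s−m}(P) · G_m · P⁻¹, where δ^{j} denotes the j-fold entrywise application of δ. -/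
noncomputable section

/-- The iterated matrices of `G` relative to the entrywise derivation `δ`:
`G_0 = 1`, `G_{s+1} = G_s · G + δ(G_s)`. -/
def iterMatD {R : Type*} [CommRing R] {n : ℕ} (δ : R → R)
    (G : Matrix (Fin n) (Fin n) R) : ℕ → Matrix (Fin n) (Fin n) R
  | 0 => 1
  | s + 1 => iterMatD δ G s * G + (iterMatD δ G s).map δ

/-!
For a derivation `D` put `∇_G x = x * G + D x`, so that `G_s = ∇_G^s 1`. The definition of `H` says
`H * P = P * G + D P`, hence right multiplication by `P` intertwines `∇_H` with `∇_G`, and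
`H_s * P = ∇_G^s P`. Since `∇_G (x * y) = D x * y + x * ∇_G y`, the iterated Leibniz rule expands
`∇_G^s (P * 1)` into the required binomial sum.
-/

open Finset

theorem iterate_leibniz {A B C : Type*} [AddCommMonoid C] (f : A → A) (g : B → B) (h : C →+ C)
    (μ : A → B → C) (leibniz : ∀ a b, h (μ a b) = μ (f a) b + μ a (g b)) (s : ℕ) (a : A) (b : B) :
    h^[s] (μ a b) = ∑ ij ∈ antidiagonal s, s.choose ij.1 • μ (f^[ij.2] a) (g^[ij.1] b) := by
  induction s with
  | zero => simp
  | succ s ih =>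
    rw [sum_antidiagonal_choose_succ_nsmul (fun i j => μ (f^[j] a) (g^[i] b)),
      Function.iterate_succ_apply', ih, map_sum, ← sum_add_distrib]
    refine sum_congr rfl fun ij hij => ?_
    have choose_swap : s.choose ij.2 = s.choose ij.1 :=
      Nat.choose_symm_of_eq_add (by rw [add_comm, mem_antidiagonal.mp hij])
    rw [map_nsmul, leibniz, smul_add, choose_swap, Function.iterate_succ_apply',
      Function.iterate_succ_apply', add_comm]

section Connection

variable {A : Type*}

/-- The connection `∇_G x = x * G + D x` with connection matrix `G` over the additive map `D`,
with coefficients acting on the right. The iterates `∇_G^s 1` are the iterated matrices of `G`. -/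
def connection [NonUnitalNonAssocSemiring A] (D : A →+ A) (G : A) : A →+ A :=
  AddMonoidHom.mulRight G + D

theorem connection_apply [NonUnitalNonAssocSemiring A] (D : A →+ A) (G x : A) :
    connection D G x = x * G + D x :=
  rfl

theorem connection_mul [NonUnitalSemiring A] {D : A →+ A}
    (leibniz : ∀ x y, D (x * y) = D x * y + x * D y) (G x y : A) :
    connection D G (x * y) = D x * y + x * connection D G y := by
  simp only [connection_apply, leibniz, mul_add, mul_assoc]
  abel

theorem semiconj_mul_right_connection [NonUnitalSemiring A] {D : A →+ A}
    (leibniz : ∀ x y, D (x * y) = D x * y + x * D y) {G H P : A} (hP : H * P = P * G + D P) :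
    Function.Semiconj (· * P) (connection D H) (connection D G) := by
  intro x
  simp only [connection_apply, leibniz, add_mul, mul_assoc, hP, mul_add]
  abel

theorem iterMat_gauge_transform_general [Semiring A] {D : A →+ A}
    (leibniz : ∀ x y, D (x * y) = D x * y + x * D y) (G P : A) [Invertible P] (H : A)
    (hH : H = P * G * ⅟P + D P * ⅟P) (s : ℕ) :
    (connection D H)^[s] 1 =
      ∑ m ∈ range (s + 1), s.choose m • (D^[s - m] P * (connection D G)^[m] 1 * ⅟P) := by
  have intertwine : H * P = P * G + D P := by
    rw [hH, add_mul, invOf_mul_cancel_right, invOf_mul_cancel_right]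
  calc (connection D H)^[s] 1
      = (connection D H)^[s] 1 * P * ⅟P := (mul_invOf_cancel_right _ P).symm
    _ = (connection D G)^[s] (P * 1) * ⅟P := by
      rw [((semiconj_mul_right_connection leibniz intertwine).iterate_right s).eq 1, one_mul,
        mul_one]
    _ = (∑ ij ∈ antidiagonal s,
          s.choose ij.1 • (D^[ij.2] P * (connection D G)^[ij.1] 1)) * ⅟P := by
      rw [iterate_leibniz D _ _ (· * ·) (connection_mul leibniz G)]
    _ = ∑ m ∈ range (s + 1), s.choose m • (D^[s - m] P * (connection D G)^[m] 1 * ⅟P) := by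
      simp only [Nat.sum_antidiagonal_eq_sum_range_succ_mk, sum_mul, smul_mul_assoc]

end Connection

section Matrix

variable {R : Type*}

theorem matrix_map_derivation_mul {S l m n : Type*} [CommSemiring S] [CommSemiring R] [Algebra S R]
    [Fintype m] (δ : Derivation S R R) (M : Matrix l m R) (N : Matrix m n R) :
    (M * N).map δ = M.map δ * N + M * N.map δ := by
  ext i j
  simp only [Matrix.map_apply, Matrix.mul_apply, Matrix.add_apply, map_sum, Derivation.leibniz,
    smul_eq_mul, sum_add_distrib, mul_comm, add_comm]

theorem matrix_map_iterate {m n : Type*} (f : R → R) (M : Matrix m n R) (k : ℕ) :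
    (fun N : Matrix m n R => N.map f)^[k] M = M.map f^[k] := by
  induction k with
  | zero => exact M.map_id.symm
  | succ k ih => rw [Function.iterate_succ_apply', ih, Matrix.map_map, ← Function.iterate_succ']

theorem iterMatD_eq_iterate_connection [CommRing R] {n : ℕ} (δ : R →+ R)
    (G : Matrix (Fin n) (Fin n) R) (s : ℕ) :
    iterMatD δ G s = (connection δ.mapMatrix G)^[s] 1 := by
  induction s with
  | zero => rfl
  | succ s ih => rw [Function.iterate_succ_apply', ← ih]; rfl

end Matrix

/-- Under the gauge transformation `H = P·G·P⁻¹ + δ(P)·P⁻¹`, the iterated matrices satisfy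
`H_s = Σ_{m=0}^{s} binom(s,m) · δ^{s−m}(P) · G_m · P⁻¹`. -/
theorem iterMat_gauge_transform {R : Type*} [CommRing R] {n : ℕ}
    (δ : Derivation ℤ R R) (G P : Matrix (Fin n) (Fin n) R) [Invertible P]
    (H : Matrix (Fin n) (Fin n) R)
    (hH : H = P * G * ⅟P + P.map ⇑δ * ⅟P) :
    ∀ s : ℕ, iterMatD ⇑δ H s =
      ∑ m ∈ Finset.range (s + 1),
        s.choose m • (P.map ((⇑δ)^[s - m]) * iterMatD ⇑δ G m * ⅟P) := by
  simp only [← matrix_map_iterate, ← AddMonoidHom.coe_coe δ, iterMatD_eq_iterate_connection]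
  exact iterMat_gauge_transform_general (matrix_map_derivation_mul δ) G P H hH

end
end

section
/- Let k be a field, N ≥ 1, and let M₁, …, M_N be k-vector spaces. Let V = M₁ × ⋯ × M_N with the canonical inclusions ι_i : M_i → V. Then the k-linear map φ : M₁ ⊗_k ⋯ ⊗_k M_N → Sym^N(V) determined by φ(m₁ ⊗ ⋯ ⊗ m_N) = class of ι₁(m₁) ⊗ ⋯ ⊗ ι_N(m_N) is injective. -/
open scoped TensorProduct

noncomputable section

/-!
The map has a retraction. Projecting the `i`-th factor of `(∏ᵢ Mᵢ)^{⊗ι}` to `Mᵢ` for every `i` is a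
left inverse of `⨂ᵢ Mᵢ → (∏ᵢ Mᵢ)^{⊗ι}`, but it is not symmetric. Its sum over all permutations is
symmetric, hence descends to the symmetric power, and it is still a left inverse: a nontrivial
permutation places the image of some `mᵢ` in a factor `j ≠ i`, where its projection to `Mⱼ`
vanishes. So no division by a factorial is needed, and the argument works in
every characteristic.
-/

section Symmetrization

variable {R ι V P : Type*} [DecidableEq ι] [Semiring R]
  [AddCommMonoid V] [Module R V] [AddCommMonoid P] [Module R P]
  {M : ι → Type*} [∀ i, AddCommMonoid (M i)] [∀ i, Module R (M i)]

theorem map_single_apply_eq_zero_of_ne_id (f : MultilinearMap R M P) (m : ∀ i, M i)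
    {σ : ι → ι} (hσ : σ ≠ id) :
    (f fun i => (Pi.single (σ i) (m (σ i)) : ∀ j, M j) i) = 0 := by
  obtain ⟨i, hi⟩ := Function.ne_iff.mp hσ
  exact f.map_coord_zero i (Pi.single_eq_of_ne' hi _)

variable [Fintype ι]

/-- The symmetrization of a multilinear map: the sum of its permutations, not divided by the
factorial (compare `MultilinearMap.alternatization`). -/
def symmetrization (f : MultilinearMap R (fun _ : ι => V) P) :
    MultilinearMap R (fun _ : ι => V) P :=
  ∑ σ : Equiv.Perm ι, f.domDomCongr σ

theorem symmetrization_apply (f : MultilinearMap R (fun _ : ι => V) P) (v : ι → V) :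
    symmetrization f v = ∑ σ : Equiv.Perm ι, f fun i => v (σ i) := by
  simp only [symmetrization, sum_apply, MultilinearMap.domDomCongr_apply]

theorem domDomCongr_symmetrization (f : MultilinearMap R (fun _ : ι => V) P)
    (σ : Equiv.Perm ι) : (symmetrization f).domDomCongr σ = symmetrization f := by
  ext v
  simp only [MultilinearMap.domDomCongr_apply, symmetrization_apply]
  exact Equiv.sum_comp (Equiv.mulLeft σ) fun τ => f fun i => v (τ i)

theorem symmetrization_compLinearMap_proj_single (f : MultilinearMap R M P) (m : ∀ i, M i) :
    symmetrization (f.compLinearMap fun i => LinearMap.proj i) (fun i => Pi.single i (m i)) =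
      f m := by
  simp only [symmetrization_apply, MultilinearMap.compLinearMap_apply, LinearMap.proj_apply]
  rw [Fintype.sum_eq_single 1 fun σ hσ =>
    map_single_apply_eq_zero_of_ne_id f m (DFunLike.coe_injective.ne hσ)]
  simp only [Equiv.Perm.one_apply, Pi.single_eq_same]

end Symmetrization

section SymmetricPower

variable (R ι V : Type*) [CommRing R] [AddCommGroup V] [Module R V]

/-- The submodule of `V^{⊗ι}` spanned by the differences of pure tensors that differ by a
permutation of the factors; the quotient by it is the symmetric power `Sym^ι(V)`. -/
def symmetricRelations : Submodule R (⨂[R] _ : ι, V) :=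
  Submodule.span R {x | ∃ (v : ι → V) (σ : Equiv.Perm ι),
    x = PiTensorProduct.tprod R v - PiTensorProduct.tprod R fun i => v (σ i)}

variable {R ι V} {P : Type*} [AddCommGroup P] [Module R P]

theorem symmetricRelations_le_ker_lift {f : MultilinearMap R (fun _ : ι => V) P}
    (hf : ∀ σ : Equiv.Perm ι, f.domDomCongr σ = f) :
    symmetricRelations R ι V ≤ LinearMap.ker (PiTensorProduct.lift f) := by
  rw [symmetricRelations, Submodule.span_le]
  rintro _ ⟨v, σ, rfl⟩
  have hperm : (f fun i => v (σ i)) = f v := DFunLike.congr_fun (hf σ) v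
  simp only [SetLike.mem_coe, LinearMap.mem_ker, map_sub, PiTensorProduct.lift.tprod, hperm,
    sub_self]

end SymmetricPower

section Retraction

variable {R ι : Type*} [CommRing R] [DecidableEq ι]
  {M : ι → Type*} [∀ i, AddCommGroup (M i)] [∀ i, Module R (M i)]

variable (R M) in
/-- The retraction of `⨂ᵢ Mᵢ → Sym^ι(∏ᵢ Mᵢ)`, induced by the symmetrization of
`(v₁, …, v_N) ↦ (v₁)₁ ⊗ ⋯ ⊗ (v_N)_N`. -/
def symmetricPowerRetraction [Fintype ι] :
    ((⨂[R] _ : ι, (∀ i, M i)) ⧸ symmetricRelations R ι (∀ i, M i)) →ₗ[R] ⨂[R] i, M i :=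
  (symmetricRelations R ι (∀ i, M i)).liftQ
    (PiTensorProduct.lift <| symmetrization <|
      (PiTensorProduct.tprod R).compLinearMap fun i => LinearMap.proj i)
    (symmetricRelations_le_ker_lift <| domDomCongr_symmetrization _)

theorem symmetricPowerRetraction_mk_tprod_single [Fintype ι] (m : ∀ i, M i) :
    symmetricPowerRetraction R M
        (Submodule.Quotient.mk (PiTensorProduct.tprod R fun i => Pi.single i (m i))) =
      PiTensorProduct.tprod R m := by
  rw [symmetricPowerRetraction, Submodule.liftQ_apply, PiTensorProduct.lift.tprod,
    symmetrization_compLinearMap_proj_single]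

theorem tensor_to_symmetricPower_injective_general [Finite ι]
    (φ : (⨂[R] i, M i) →ₗ[R] ((⨂[R] _ : ι, (∀ i, M i)) ⧸ symmetricRelations R ι (∀ i, M i)))
    (hφ : ∀ m : ∀ i, M i,
      φ (PiTensorProduct.tprod R m) =
        Submodule.Quotient.mk (PiTensorProduct.tprod R fun i => Pi.single i (m i))) :
    Function.Injective φ := by
  cases nonempty_fintype ι
  have hleft : symmetricPowerRetraction R M ∘ₗ φ = LinearMap.id := by
    ext m
    simp only [LinearMap.compMultilinearMap_apply, LinearMap.comp_apply, LinearMap.id_apply, hφ,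
      symmetricPowerRetraction_mk_tprod_single]
  exact Function.LeftInverse.injective (LinearMap.congr_fun hleft)

end Retraction

/-- The canonical linear map `M₁ ⊗ ⋯ ⊗ M_N → Sym^N(M₁ × ⋯ × M_N)`,
`m₁ ⊗ ⋯ ⊗ m_N ↦ class of ι₁(m₁) ⊗ ⋯ ⊗ ι_N(m_N)`, is injective. -/
theorem tensor_to_symmetricPower_injective
    (k : Type*) [Field k] (N : ℕ) (hN : 1 ≤ N)
    (M : Fin N → Type*) [∀ i, AddCommGroup (M i)] [∀ i, Module k (M i)]
    (symRel : Submodule k (⨂[k] _ : Fin N, (∀ i, M i)))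
    (hsym : symRel = Submodule.span k
      {x | ∃ (v : Fin N → ∀ i, M i) (σ : Equiv.Perm (Fin N)),
        x = PiTensorProduct.tprod k v - PiTensorProduct.tprod k fun i => v (σ i)})
    (φ : (⨂[k] i, M i) →ₗ[k] ((⨂[k] _ : Fin N, (∀ i, M i)) ⧸ symRel))
    (hφ : ∀ m : ∀ i, M i,
      φ (PiTensorProduct.tprod k m) =
        Submodule.Quotient.mk (PiTensorProduct.tprod k fun i => Pi.single i (m i))) :
    Function.Injective φ := by
  subst hsym
  exact tensor_to_symmetricPower_injective_general φ hφ

end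
end
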